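/- There exists an absolute constant C₁ > 0 such that for every 1 < p < ∞, every n ∈ ℕ, every f : C_n → ℝ, and every t > 0, one has ‖e^{tΔ}(f − E f)‖_p ≤ e^{−k₁ t} ‖f − E f‖_p, where k₁ = C₁ · c_p, c_p = 2·min(1/p, 1/p′), and p′ = p/(p−1). -/

import Mathlib

open Finset MeasureTheory Real

noncomputable section

/-- Expectation on the Hamming cube `{-1,1}^n`, modeled as `Fin n → Bool`
(`true ↔ 1`, `false ↔ -1`), with the uniform probability measure. -/
def cubeE {n : ℕ} (f : (Fin n → Bool) → ℝ) : ℝ :=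
  (∑ x : Fin n → Bool, f x) / 2 ^ n

/-- The Walsh monomial `x^S = ∏_{i ∈ S} x_i`. -/
def walsh {n : ℕ} (S : Finset (Fin n)) (x : Fin n → Bool) : ℝ :=
  ∏ i ∈ S, (if x i then (1 : ℝ) else -1)

/-- Fourier coefficient `f̂(S) = E (f · x^S)`. -/
def cubeFourier {n : ℕ} (f : (Fin n → Bool) → ℝ) (S : Finset (Fin n)) : ℝ :=
  cubeE fun x => f x * walsh S x

/-- The heat semigroup `e^{tΔ} f = Σ_S e^{-t|S|} f̂(S) x^S`. -/
def heat1 {n : ℕ} (t : ℝ) (f : (Fin n → Bool) → ℝ) : (Fin n → Bool) → ℝ :=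
  fun x => ∑ S : Finset (Fin n), Real.exp (-t * (S.card : ℝ)) * cubeFourier f S * walsh S x

/-- The fractional heat semigroup `e^{tΔ_γ} f = Σ_S e^{-t|S|^γ} f̂(S) x^S`. -/
def heatFrac {n : ℕ} (γ t : ℝ) (f : (Fin n → Bool) → ℝ) : (Fin n → Bool) → ℝ :=
  fun x => ∑ S : Finset (Fin n), Real.exp (-t * (S.card : ℝ) ^ γ) * cubeFourier f S * walsh S x

/-- The Laplacian `Δf = -Σ_S |S| f̂(S) x^S`. -/
def lap {n : ℕ} (f : (Fin n → Bool) → ℝ) : (Fin n → Bool) → ℝ :=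
  fun x => -∑ S : Finset (Fin n), (S.card : ℝ) * cubeFourier f S * walsh S x

/-- The fractional Laplacian `Δ_γ f = -Σ_S |S|^γ f̂(S) x^S`. -/
def fracLap {n : ℕ} (γ : ℝ) (f : (Fin n → Bool) → ℝ) : (Fin n → Bool) → ℝ :=
  fun x => -∑ S : Finset (Fin n), (S.card : ℝ) ^ γ * cubeFourier f S * walsh S x

/-- The discrete partial derivative `∇_j f`. -/
def cubeGrad {n : ℕ} (j : Fin n) (f : (Fin n → Bool) → ℝ) (x : Fin n → Bool) : ℝ :=
  (f (Function.update x j true) - f (Function.update x j false)) / 2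

/-- The squared length of the discrete gradient, `|∇f|²(x) = Σ_j |∇_j f(x)|²`. -/
def gradSq {n : ℕ} (f : (Fin n → Bool) → ℝ) (x : Fin n → Bool) : ℝ :=
  ∑ j : Fin n, (cubeGrad j f x) ^ 2

/-- The `L^p` norm `‖f‖_p = (E|f|^p)^{1/p}` on the Hamming cube. -/
def pNorm {n : ℕ} (p : ℝ) (f : (Fin n → Bool) → ℝ) : ℝ :=
  (cubeE fun x => |f x| ^ p) ^ (1 / p)

/-! Write `g^[q] = sign g · |g|^q` and let `𝓔` be the Dirichlet form
`𝓔(f, h) = E ⟨∇f, ∇h⟩ = -E (h Δf)`.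
Since `d/dt E|e^{tΔ}f|^p = -p 𝓔(e^{tΔ}f, (e^{tΔ}f)^[p-1])`, by Grönwall's inequality it is enough
to bound `𝓔(f, f^[p-1])` from below by a multiple of `E|f|^p` for `f` of mean zero. With
`c_p = min(2/p, 2 - 2/p)`, the Stroock–Varopoulos inequality and the Poincaré inequality give
`𝓔(f, f^[p-1]) ≥ c_p 𝓔(f^[p/2], f^[p/2]) ≥ c_p Var(f^[p/2])`. Finally, `g = f^[p/2]` need not have
mean zero, but `g^[2/p] = f` does, and this forces `E g² ≤ 4 Var g`, where `E g² = E|f|^p`. -/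

open scoped BigOperators

section SignedRpow

/-- The signed (odd) power function `a ↦ sign a · |a|^q`, the monotone replacement for `a ↦ a ^ q`
on the whole real line. It vanishes at `0` even for `q = 0`. -/
def signedRpow (q a : ℝ) : ℝ := SignType.sign a * |a| ^ q

variable {q r β p a : ℝ}

lemma signedRpow_zero_right (q : ℝ) : signedRpow q 0 = 0 := by simp [signedRpow]

lemma signedRpow_one_left (a : ℝ) : signedRpow 1 a = a := by simp [signedRpow]

lemma signedRpow_of_pos (ha : 0 < a) : signedRpow q a = a ^ q := by
  simp [signedRpow, sign_pos ha, abs_of_pos ha]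

lemma signedRpow_of_nonneg (hq : q ≠ 0) (ha : 0 ≤ a) : signedRpow q a = a ^ q := by
  rcases ha.eq_or_lt with rfl | ha
  · rw [signedRpow_zero_right, Real.zero_rpow hq]
  · exact signedRpow_of_pos ha

lemma signedRpow_neg (q a : ℝ) : signedRpow q (-a) = -signedRpow q a := by
  simp [signedRpow, Left.sign_neg]

lemma signedRpow_mul (q a b : ℝ) : signedRpow q (a * b) = signedRpow q a * signedRpow q b := by
  simp only [signedRpow, sign_mul, SignType.coe_mul, abs_mul,
    Real.mul_rpow (abs_nonneg a) (abs_nonneg b)]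
  ring

lemma signedRpow_signedRpow (q r a : ℝ) :
    signedRpow q (signedRpow r a) = signedRpow (r * q) a := by
  wlog ha : 0 ≤ a generalizing a
  · have h := this (-a) (by linarith)
    simpa only [signedRpow_neg, neg_inj] using h
  rcases ha.eq_or_lt with rfl | ha
  · simp only [signedRpow_zero_right]
  · rw [signedRpow_of_pos ha, signedRpow_of_pos ha, signedRpow_of_pos (by positivity),
      Real.rpow_mul ha.le]

lemma signedRpow_mul_signedRpow (h : q + r ≠ 0) (a : ℝ) :
    signedRpow q a * signedRpow r a = |a| ^ (q + r) := by
  wlog ha : 0 ≤ a generalizing a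
  · have h := this (-a) (by linarith)
    simpa only [signedRpow_neg, neg_mul_neg, abs_neg] using h
  rcases ha.eq_or_lt with rfl | ha
  · rw [signedRpow_zero_right, zero_mul, abs_zero, Real.zero_rpow h]
  · rw [signedRpow_of_pos ha, signedRpow_of_pos ha, abs_of_pos ha, Real.rpow_add ha]

lemma hasDerivAt_abs_rpow_signedRpow (hp : 1 < p) (a : ℝ) :
    HasDerivAt (fun x : ℝ => |x| ^ p) (p * signedRpow (p - 1) a) a := by
  convert hasDerivAt_abs_rpow a hp using 1
  rcases eq_or_ne a 0 with rfl | ha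
  · simp [signedRpow_zero_right]
  · rw [signedRpow, show p - 1 = p - 2 + 1 by ring, Real.rpow_add_one (abs_ne_zero.mpr ha),
      mul_assoc p]
    congr 1
    rw [← mul_assoc, mul_right_comm, sign_mul_abs, mul_comm]

-- Any minorant `A - B (s - 1)²` with `A > 0` would do: averaged over `s = g / E g`, it yields the
-- constant `1 + B / A` in `expect_sq_le_four_mul_variance`.
lemma one_half_sub_le_signedRpow (hβ₀ : 0 ≤ β) (hβ₂ : β ≤ 2) (s : ℝ) :
    1 / 2 - 3 / 2 * (s - 1) ^ 2 ≤ signedRpow β s := by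
  rcases lt_trichotomy s 0 with hs | rfl | hs
  · have hpow : (-s) ^ β ≤ (1 - s) ^ 2 := calc
      (-s) ^ β ≤ (1 - s) ^ β := Real.rpow_le_rpow (by linarith) (by linarith) hβ₀
      _ ≤ (1 - s) ^ (2 : ℝ) := Real.rpow_le_rpow_of_exponent_le (by linarith) hβ₂
      _ = (1 - s) ^ 2 := Real.rpow_two _
    rw [← neg_neg s, signedRpow_neg, signedRpow_of_pos (by linarith), neg_neg]
    nlinarith
  · norm_num [signedRpow_zero_right]
  · rw [signedRpow_of_pos hs]
    rcases le_total s 1 with hs₁ | hs₁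
    · have hpow : s ^ 2 ≤ s ^ β := by
        rw [← Real.rpow_two]
        exact Real.rpow_le_rpow_of_exponent_ge hs hs₁ hβ₂
      nlinarith [sq_nonneg (5 * s - 3)]
    · nlinarith [Real.one_le_rpow hs₁ hβ₀, sq_nonneg (s - 1)]

end SignedRpow

section StroockVaropoulos

variable {α p s : ℝ}

lemma min_mul_one_sub_sq_le_one_sub_rpow_mul (hα₀ : 0 < α) (hα₂ : α < 2) (hs₀ : 0 ≤ s)
    (hs₁ : s ≤ 1) :
    min α (2 - α) * (1 - s) ^ 2 ≤ (1 - s ^ α) * (1 - s ^ (2 - α)) := by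
  wlog hα₁ : α ≤ 1 generalizing α
  · have h := this (α := 2 - α) (by linarith) (by linarith) (by linarith)
    rwa [sub_sub_cancel, min_comm, mul_comm (1 - s ^ (2 - α))] at h
  have bernoulli : α * (1 - s) ≤ 1 - s ^ α := by
    have h := rpow_one_add_le_one_add_mul_self (s := s - 1) (by linarith) hα₀.le hα₁
    rw [add_sub_cancel] at h
    linarith
  have hpow : s ^ (2 - α) ≤ s := Real.rpow_le_self_of_le_one hs₀ hs₁ (by linarith)
  have hs : 0 ≤ 1 - s := by linarith
  calc min α (2 - α) * (1 - s) ^ 2 ≤ α * (1 - s) ^ 2 := by gcongr; exact min_le_left _ _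
    _ = α * (1 - s) * (1 - s) := by ring
    _ ≤ (1 - s ^ α) * (1 - s ^ (2 - α)) :=
      mul_le_mul bernoulli (by linarith) hs ((mul_nonneg hα₀.le hs).trans bernoulli)

lemma one_add_sq_le_one_add_rpow_mul (hs : 0 ≤ s) (α : ℝ) :
    (1 + s) ^ 2 ≤ (1 + s ^ α) * (1 + s ^ (2 - α)) := by
  rcases hs.eq_or_lt with rfl | hs
  · have h : ∀ q : ℝ, 0 ≤ (0 : ℝ) ^ q := Real.zero_rpow_nonneg
    nlinarith [h α, h (2 - α), mul_nonneg (h α) (h (2 - α))]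
  have hmul : s ^ α * s ^ (2 - α) = s ^ 2 := by
    rw [← Real.rpow_add hs, add_sub_cancel, Real.rpow_two]
  have amgm : 2 * s ≤ s ^ α + s ^ (2 - α) := by
    refine abs_le_of_sq_le_sq' ?_ (by positivity) |>.2
    nlinarith [sq_nonneg (s ^ α - s ^ (2 - α))]
  nlinarith

lemma min_mul_one_sub_sq_le_one_sub_signedRpow_mul (hα₀ : 0 < α) (hα₂ : α < 2) (hs : |s| ≤ 1) :
    min α (2 - α) * (1 - s) ^ 2 ≤ (1 - signedRpow α s) * (1 - signedRpow (2 - α) s) := by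
  rcases le_or_gt 0 s with hs₀ | hs₀
  · rw [signedRpow_of_nonneg hα₀.ne' hs₀, signedRpow_of_nonneg (by linarith) hs₀]
    exact min_mul_one_sub_sq_le_one_sub_rpow_mul hα₀ hα₂ hs₀ (le_of_abs_le hs)
  · have hmin : min α (2 - α) ≤ 1 := by
      rcases le_total α 1 with h | h
      · exact (min_le_left _ _).trans h
      · exact (min_le_right _ _).trans (by linarith)
    obtain ⟨r, rfl⟩ : ∃ r, s = -r := ⟨-s, (neg_neg s).symm⟩
    have hr : 0 < r := by linarith
    simp only [signedRpow_neg, signedRpow_of_pos hr, sub_neg_eq_add]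
    calc min α (2 - α) * (1 + r) ^ 2 ≤ 1 * (1 + r) ^ 2 := by gcongr
      _ = (1 + r) ^ 2 := one_mul _
      _ ≤ (1 + r ^ α) * (1 + r ^ (2 - α)) := one_add_sq_le_one_add_rpow_mul hr.le α

lemma min_mul_sub_sq_le_signedRpow_sub_mul (hα₀ : 0 < α) (hα₂ : α < 2) (u v : ℝ) :
    min α (2 - α) * (u - v) ^ 2 ≤
      (signedRpow α u - signedRpow α v) * (signedRpow (2 - α) u - signedRpow (2 - α) v) := by
  wlog huv : |v| ≤ |u| generalizing u v
  · have h := this v u (le_of_not_ge huv)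
    linarith
  rcases eq_or_ne u 0 with rfl | hu
  · obtain rfl : v = 0 := by simpa using huv
    simp
  obtain ⟨s, rfl⟩ : ∃ s, v = u * s := ⟨v / u, by field_simp⟩
  have hs : |s| ≤ 1 := by
    rw [abs_mul] at huv
    exact le_of_mul_le_mul_left (by linarith) (abs_pos.mpr hu)
  have hu₂ : signedRpow α u * signedRpow (2 - α) u = u ^ 2 := by
    rw [signedRpow_mul_signedRpow (by norm_num), add_sub_cancel, Real.rpow_two, sq_abs]
  calc min α (2 - α) * (u - u * s) ^ 2 = u ^ 2 * (min α (2 - α) * (1 - s) ^ 2) := by ring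
    _ ≤ u ^ 2 * ((1 - signedRpow α s) * (1 - signedRpow (2 - α) s)) := by
      exact mul_le_mul_of_nonneg_left
        (min_mul_one_sub_sq_le_one_sub_signedRpow_mul hα₀ hα₂ hs) (sq_nonneg u)
    _ = _ := by rw [signedRpow_mul, signedRpow_mul, ← hu₂]; ring

lemma min_mul_signedRpow_sub_sq_le (hp : 1 < p) (a b : ℝ) :
    min (2 / p) (2 - 2 / p) * (signedRpow (p / 2) a - signedRpow (p / 2) b) ^ 2 ≤
      (a - b) * (signedRpow (p - 1) a - signedRpow (p - 1) b) := by
  have hp₀ : 0 < p := by linarith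
  have hp₂ : 2 / p < 2 := by rw [div_lt_iff₀ hp₀]; linarith
  have h := min_mul_sub_sq_le_signedRpow_sub_mul (by positivity) hp₂
    (signedRpow (p / 2) a) (signedRpow (p / 2) b)
  have h₁ : p / 2 * (2 / p) = 1 := by field_simp
  have h₂ : p / 2 * (2 - 2 / p) = p - 1 := by field_simp
  simpa only [signedRpow_signedRpow, h₁, h₂, signedRpow_one_left] using h

end StroockVaropoulos

lemma expect_sq_le_four_mul_variance {ι : Type*} [Fintype ι] [Nonempty ι] {β : ℝ} (hβ₀ : 0 ≤ β)
    (hβ₂ : β ≤ 2) {g : ι → ℝ} (hg : 𝔼 i, signedRpow β (g i) = 0) :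
    𝔼 i, g i ^ 2 ≤ 4 * (𝔼 i, g i ^ 2 - (𝔼 i, g i) ^ 2) := by
  set m := 𝔼 i, g i with hm
  rcases eq_or_ne m 0 with hm₀ | hm₀
  · have : 0 ≤ 𝔼 i, g i ^ 2 := expect_nonneg fun i _ => sq_nonneg _
    rw [hm₀]
    linarith
  have hmean : 𝔼 i, signedRpow β (g i / m) = 0 := by
    simp only [div_eq_mul_inv, signedRpow_mul, ← expect_mul, hg, zero_mul]
  have hle : 𝔼 i, (1 / 2 - 3 / 2 * (g i / m - 1) ^ 2) ≤ 0 :=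
    hmean ▸ expect_le_expect fun i _ => one_half_sub_le_signedRpow hβ₀ hβ₂ _
  have hexpand : 𝔼 i, (1 / 2 - 3 / 2 * (g i / m - 1) ^ 2) =
      2 - 3 / 2 / m ^ 2 * 𝔼 i, g i ^ 2 := by
    have h : ∀ i, 1 / 2 - 3 / 2 * (g i / m - 1) ^ 2 =
        -1 - 3 / 2 / m ^ 2 * g i ^ 2 + 3 / m * g i := fun i => by ring
    simp only [h, expect_add_distrib, expect_sub_distrib, ← mul_expect, Fintype.expect_const, ← hm]
    field_simp
    ring
  have hsq : 4 * m ^ 2 ≤ 3 * 𝔼 i, g i ^ 2 := by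
    rw [hexpand, sub_nonpos, div_div, div_mul_eq_mul_div, le_div_iff₀ (by positivity)] at hle
    linarith
  linarith

lemma le_mul_exp_of_hasDerivAt_le {u u' : ℝ → ℝ} {k t : ℝ} (hu : ∀ s, HasDerivAt u (u' s) s)
    (hle : ∀ s, u' s ≤ k * u s) (ht : 0 ≤ t) : u t ≤ u 0 * Real.exp (k * t) := by
  have h := le_gronwallBound_of_liminf_deriv_right_le (ε := 0)
    (fun s _ => (hu s).continuousAt.continuousWithinAt)
    (fun s _ _ => (hu s).hasDerivWithinAt.liminf_right_slope_le) le_rfl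
    (fun s _ => by simpa using hle s) t (Set.right_mem_Icc.mpr ht)
  simpa [gronwallBound_ε0] using h

section Walsh

variable {n : ℕ}

lemma cubeE_eq_expect (f : (Fin n → Bool) → ℝ) : cubeE f = 𝔼 x, f x := by
  simp [cubeE, Fintype.expect_eq_sum_div_card]

lemma cubeFourier_eq_expect (f : (Fin n → Bool) → ℝ) (S : Finset (Fin n)) :
    cubeFourier f S = 𝔼 x, f x * walsh S x :=
  cubeE_eq_expect _

lemma cubeFourier_empty (f : (Fin n → Bool) → ℝ) : cubeFourier f ∅ = 𝔼 x, f x := by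
  simp [cubeFourier_eq_expect, walsh]

lemma walsh_mul_self (S : Finset (Fin n)) (x : Fin n → Bool) : walsh S x * walsh S x = 1 := by
  rw [walsh, ← prod_mul_distrib]
  exact prod_eq_one fun i _ => by split_ifs <;> norm_num

lemma sum_walsh_mul_walsh (x y : Fin n → Bool) :
    ∑ S, walsh S x * walsh S y = if x = y then 2 ^ n else 0 := by
  have hprod : ∑ S, walsh S x * walsh S y =
      ∏ i, (1 + (if x i then (1 : ℝ) else -1) * (if y i then 1 else -1)) := by
    simp only [prod_one_add, powerset_univ, walsh, prod_mul_distrib]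
  rw [hprod]
  split_ifs with h
  · subst h
    have htwo : ∀ i, 1 + (if x i then (1 : ℝ) else -1) * (if x i then 1 else -1) = 2 := fun i => by
      split_ifs <;> norm_num
    simp only [htwo, prod_const, card_univ, Fintype.card_fin]
  · obtain ⟨i, hi⟩ := Function.ne_iff.mp h
    refine prod_eq_zero (mem_univ i) ?_
    cases hx : x i <;> cases hy : y i <;> simp_all

lemma expect_walsh_mul_walsh (S T : Finset (Fin n)) :
    𝔼 x, walsh S x * walsh T x = if S = T then 1 else 0 := by
  split_ifs with h
  · subst h
    simp only [walsh_mul_self, Fintype.expect_const]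
  · have hprod : ∀ x : Fin n → Bool, walsh S x * walsh T x =
        ∏ i, (if i ∈ S then if x i then (1 : ℝ) else -1 else 1) *
          (if i ∈ T then if x i then 1 else -1 else 1) := fun x => by
      simp only [walsh, prod_mul_distrib, prod_ite_mem, univ_inter]
    obtain ⟨i, hi⟩ : ∃ i, ¬(i ∈ S ↔ i ∈ T) := by simpa [Finset.ext_iff] using h
    simp only [hprod, Fintype.expect_eq_sum_div_card]
    rw [← Fintype.prod_sum fun i (b : Bool) => (if i ∈ S then if b then (1 : ℝ) else -1 else 1) *
      (if i ∈ T then if b then 1 else -1 else 1), prod_eq_zero (mem_univ i), zero_div]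
    by_cases hS : i ∈ S <;> by_cases hT : i ∈ T <;> simp_all

lemma sum_cubeFourier_mul_walsh (f : (Fin n → Bool) → ℝ) (x : Fin n → Bool) :
    ∑ S, cubeFourier f S * walsh S x = f x := by
  simp only [cubeFourier_eq_expect, expect_mul, mul_assoc]
  rw [← expect_sum_comm]
  simp only [← mul_sum, sum_walsh_mul_walsh, mul_ite, mul_zero, Fintype.expect_eq_sum_div_card,
    sum_ite_eq', mem_univ, if_true]
  simp

lemma cubeFourier_sum_mul_walsh (c : Finset (Fin n) → ℝ) (T : Finset (Fin n)) :
    cubeFourier (fun x => ∑ S, c S * walsh S x) T = c T := by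
  simp only [cubeFourier_eq_expect, sum_mul, mul_assoc]
  rw [expect_sum_comm]
  simp [← mul_expect, expect_walsh_mul_walsh]

lemma expect_mul_eq_sum_cubeFourier_mul (f g : (Fin n → Bool) → ℝ) :
    𝔼 x, f x * g x = ∑ S, cubeFourier f S * cubeFourier g S := by
  have h : ∀ x, f x * g x = ∑ S, cubeFourier f S * (g x * walsh S x) := fun x => by
    rw [← sum_cubeFourier_mul_walsh f x, sum_mul]
    exact sum_congr rfl fun S _ => by ring
  simp only [h, expect_sum_comm, ← mul_expect, ← cubeFourier_eq_expect]

end Walsh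

section DirichletForm

variable {n : ℕ}

/-- The Dirichlet form `𝓔(f, h) = E ⟨∇f, ∇h⟩` of the Hamming cube, which controls the dissipation
of `L^p` norms along the heat semigroup. -/
def dirichletForm (f h : (Fin n → Bool) → ℝ) : ℝ :=
  ∑ j, 𝔼 x, cubeGrad j f x * cubeGrad j h x

lemma cubeFourier_lap (f : (Fin n → Bool) → ℝ) (S : Finset (Fin n)) :
    cubeFourier (lap f) S = -S.card * cubeFourier f S := by
  rw [← cubeFourier_sum_mul_walsh (fun S => -S.card * cubeFourier f S) S]
  congr 1
  funext x
  simp only [lap, neg_mul, sum_neg_distrib]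

lemma cubeFourier_heat1 (t : ℝ) (f : (Fin n → Bool) → ℝ) (S : Finset (Fin n)) :
    cubeFourier (heat1 t f) S = Real.exp (-t * S.card) * cubeFourier f S :=
  cubeFourier_sum_mul_walsh _ S

lemma walsh_singleton_mul_cubeGrad_walsh (j : Fin n) (S : Finset (Fin n)) (x : Fin n → Bool) :
    walsh {j} x * cubeGrad j (walsh S) x = if j ∈ S then walsh S x else 0 := by
  have hcongr : ∀ T : Finset (Fin n), j ∉ T → ∀ b, walsh T (Function.update x j b) = walsh T x :=
    fun T hT b => prod_congr rfl fun i hi => by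
      rw [Function.update_of_ne (ne_of_mem_of_not_mem hi hT)]
  split_ifs with h
  · have hS : ∀ y, walsh S y = walsh {j} y * walsh (S.erase j) y := fun y => by
      simpa only [walsh, prod_singleton] using (mul_prod_erase S _ h).symm
    rw [cubeGrad, hS x, hS, hS, hcongr _ (notMem_erase j S), hcongr _ (notMem_erase j S)]
    simp [walsh]
  · simp [cubeGrad, hcongr S h]

lemma walsh_singleton_mul_cubeGrad (j : Fin n) (f : (Fin n → Bool) → ℝ) (x : Fin n → Bool) :
    walsh {j} x * cubeGrad j f x =
      ∑ S, (if j ∈ S then cubeFourier f S else 0) * walsh S x := by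
  have hgrad : cubeGrad j f x = ∑ S, cubeFourier f S * cubeGrad j (walsh S) x := by
    simp only [cubeGrad, ← sum_cubeFourier_mul_walsh f (Function.update x j _), mul_div_assoc',
      mul_sub, ← sum_div, sum_sub_distrib]
  rw [hgrad, mul_sum]
  refine sum_congr rfl fun S _ => ?_
  rw [mul_left_comm, walsh_singleton_mul_cubeGrad_walsh]
  split_ifs <;> simp

lemma expect_cubeGrad_mul_cubeGrad (j : Fin n) (f h : (Fin n → Bool) → ℝ) :
    𝔼 x, cubeGrad j f x * cubeGrad j h x =
      ∑ S, if j ∈ S then cubeFourier f S * cubeFourier h S else 0 := calc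
  _ = 𝔼 x, (walsh {j} x * cubeGrad j f x) * (walsh {j} x * cubeGrad j h x) :=
    expect_congr rfl fun x _ => by rw [mul_mul_mul_comm, walsh_mul_self, one_mul]
  _ = _ := by
    simp only [walsh_singleton_mul_cubeGrad]
    rw [expect_mul_eq_sum_cubeFourier_mul]
    simp only [cubeFourier_sum_mul_walsh, ite_mul_ite, mul_zero]

lemma dirichletForm_eq_sum_cubeFourier (f h : (Fin n → Bool) → ℝ) :
    dirichletForm f h = ∑ S, S.card * (cubeFourier f S * cubeFourier h S) := by
  simp only [dirichletForm, expect_cubeGrad_mul_cubeGrad]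
  rw [sum_comm]
  simp

lemma expect_mul_lap (f h : (Fin n → Bool) → ℝ) :
    𝔼 x, h x * lap f x = -dirichletForm f h := by
  rw [expect_mul_eq_sum_cubeFourier_mul, dirichletForm_eq_sum_cubeFourier, ← sum_neg_distrib]
  exact sum_congr rfl fun S _ => by rw [cubeFourier_lap]; ring

lemma variance_le_dirichletForm (g : (Fin n → Bool) → ℝ) :
    𝔼 x, g x ^ 2 - (𝔼 x, g x) ^ 2 ≤ dirichletForm g g := by
  rw [sub_le_iff_le_add, ← cubeFourier_empty g, dirichletForm_eq_sum_cubeFourier]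
  simp only [sq]
  rw [expect_mul_eq_sum_cubeFourier_mul, ← add_sum_erase _ _ (mem_univ ∅),
    ← add_sum_erase univ _ (mem_univ ∅), card_empty, Nat.cast_zero, zero_mul, zero_add, add_comm]
  refine add_le_add_left (sum_le_sum fun S hS => ?_) _
  have hcard : (1 : ℝ) ≤ S.card :=
    mod_cast (nonempty_iff_ne_empty.mpr (ne_of_mem_erase hS)).card_pos
  exact le_mul_of_one_le_left (mul_self_nonneg _) hcard

lemma stroock_varopoulos {p : ℝ} (hp : 1 < p) (f : (Fin n → Bool) → ℝ) :
    min (2 / p) (2 - 2 / p) *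
        dirichletForm (fun x => signedRpow (p / 2) (f x)) (fun x => signedRpow (p / 2) (f x)) ≤
      dirichletForm f fun x => signedRpow (p - 1) (f x) := by
  simp only [dirichletForm, mul_sum, mul_expect]
  refine sum_le_sum fun j _ => expect_le_expect fun x _ => ?_
  have h := min_mul_signedRpow_sub_sq_le hp (f (Function.update x j true))
    (f (Function.update x j false))
  simp only [cubeGrad]
  linarith

lemma mul_expect_abs_rpow_le_dirichletForm {p : ℝ} (hp : 1 < p) {f : (Fin n → Bool) → ℝ}
    (hf : 𝔼 x, f x = 0) :
    min (2 / p) (2 - 2 / p) / 4 * 𝔼 x, |f x| ^ p ≤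
      dirichletForm f fun x => signedRpow (p - 1) (f x) := by
  have hp₀ : 0 < p := by linarith
  have hp₂ : 2 / p < 2 := by rw [div_lt_iff₀ hp₀]; linarith
  set g : (Fin n → Bool) → ℝ := fun x => signedRpow (p / 2) (f x)
  have hmean : 𝔼 x, signedRpow (2 / p) (g x) = 0 := by
    have hone : p / 2 * (2 / p) = 1 := by field_simp
    simpa only [g, signedRpow_signedRpow, hone, signedRpow_one_left] using hf
  have hsq : 𝔼 x, |f x| ^ p = 𝔼 x, g x ^ 2 := by
    simp only [g, sq, signedRpow_mul_signedRpow (q := p / 2) (r := p / 2) (by linarith), add_halves]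
  have : 0 ≤ min (2 / p) (2 - 2 / p) := le_min (by positivity) (by linarith)
  calc min (2 / p) (2 - 2 / p) / 4 * 𝔼 x, |f x| ^ p
      = min (2 / p) (2 - 2 / p) * ((𝔼 x, g x ^ 2) / 4) := by rw [hsq]; ring
    _ ≤ min (2 / p) (2 - 2 / p) * (𝔼 x, g x ^ 2 - (𝔼 x, g x) ^ 2) := by
      gcongr
      linarith [expect_sq_le_four_mul_variance (by positivity) hp₂.le hmean]
    _ ≤ min (2 / p) (2 - 2 / p) * dirichletForm g g := by
      gcongr
      exact variance_le_dirichletForm g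
    _ ≤ _ := stroock_varopoulos hp f

end DirichletForm

section Heat

variable {n : ℕ}

lemma heat1_zero (f : (Fin n → Bool) → ℝ) : heat1 0 f = f := by
  funext x
  simp [heat1, sum_cubeFourier_mul_walsh]

lemma expect_heat1 (t : ℝ) (f : (Fin n → Bool) → ℝ) : 𝔼 x, heat1 t f x = 𝔼 x, f x := by
  simp [← cubeFourier_empty, cubeFourier_heat1]

lemma hasDerivAt_heat1 (f : (Fin n → Bool) → ℝ) (t : ℝ) (x : Fin n → Bool) :
    HasDerivAt (fun s => heat1 s f x) (lap (heat1 t f) x) t := by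
  have hlap : lap (heat1 t f) x = ∑ S : Finset (Fin n),
      Real.exp (-t * S.card) * (-1 * S.card) * cubeFourier f S * walsh S x := by
    simp only [lap, cubeFourier_heat1, ← sum_neg_distrib]
    exact sum_congr rfl fun S _ => by ring
  rw [hlap]
  exact HasDerivAt.fun_sum fun S _ =>
    ((((hasDerivAt_id t).neg.mul_const _).exp).mul_const _).mul_const _

lemma hasDerivAt_expect_abs_rpow_heat1 {p : ℝ} (hp : 1 < p) (f : (Fin n → Bool) → ℝ) (t : ℝ) :
    HasDerivAt (fun s => 𝔼 x, |heat1 s f x| ^ p)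
      (-p * dirichletForm (heat1 t f) fun x => signedRpow (p - 1) (heat1 t f x)) t := by
  rw [neg_mul_comm, ← expect_mul_lap, mul_expect]
  simp only [Fintype.expect_eq_sum_div_card, ← mul_assoc]
  exact (HasDerivAt.fun_sum fun x _ =>
    (hasDerivAt_abs_rpow_signedRpow hp _).comp t (hasDerivAt_heat1 f t x)).div_const _

lemma expect_abs_rpow_heat1_le {p t : ℝ} (hp : 1 < p) (ht : 0 ≤ t) {f : (Fin n → Bool) → ℝ}
    (hf : 𝔼 x, f x = 0) :
    𝔼 x, |heat1 t f x| ^ p ≤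
      (𝔼 x, |f x| ^ p) * Real.exp (-p * (min (2 / p) (2 - 2 / p) / 4) * t) := by
  have hdecay : ∀ s, -p * dirichletForm (heat1 s f) (fun x => signedRpow (p - 1) (heat1 s f x)) ≤
      -p * (min (2 / p) (2 - 2 / p) / 4) * 𝔼 x, |heat1 s f x| ^ p := fun s => by
    rw [mul_assoc]
    exact mul_le_mul_of_nonpos_left
      (mul_expect_abs_rpow_le_dirichletForm hp ((expect_heat1 s f).trans hf)) (by linarith)
  simpa only [heat1_zero] using
    le_mul_exp_of_hasDerivAt_le (hasDerivAt_expect_abs_rpow_heat1 hp f) hdecay ht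

lemma pNorm_eq_expect (p : ℝ) (f : (Fin n → Bool) → ℝ) :
    pNorm p f = (𝔼 x, |f x| ^ p) ^ (1 / p) := by
  rw [pNorm, cubeE_eq_expect]

lemma pNorm_heat1_le {p t : ℝ} (hp : 1 < p) (ht : 0 ≤ t) {f : (Fin n → Bool) → ℝ}
    (hf : 𝔼 x, f x = 0) :
    pNorm p (heat1 t f) ≤ Real.exp (-(min (2 / p) (2 - 2 / p) / 4) * t) * pNorm p f := by
  have : 0 < p := by linarith
  have hnonneg : ∀ g : (Fin n → Bool) → ℝ, 0 ≤ 𝔼 x, |g x| ^ p := fun g =>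
    expect_nonneg fun x _ => by positivity
  rw [pNorm_eq_expect, pNorm_eq_expect]
  calc (𝔼 x, |heat1 t f x| ^ p) ^ (1 / p)
      ≤ ((𝔼 x, |f x| ^ p) * Real.exp (-p * (min (2 / p) (2 - 2 / p) / 4) * t)) ^ (1 / p) :=
        Real.rpow_le_rpow (hnonneg _) (expect_abs_rpow_heat1_le hp ht hf) (by positivity)
    _ = _ := by
      rw [Real.mul_rpow (hnonneg f) (Real.exp_nonneg _), ← Real.exp_mul, mul_comm]
      congr 2
      field_simp

end Heat

/-- Spectral gap for the heat semigroup in `L^p`, `1 < p < ∞`: there is an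
absolute constant `C₁ > 0` such that with `k₁ = C₁ · c_p`,
`c_p = 2 min(1/p, 1/p')`, `p' = p/(p-1)`, one has
`‖e^{tΔ}(f - Ef)‖_p ≤ e^{-k₁ t} ‖f - Ef‖_p` for all `n`, `f`, `t > 0`. -/
theorem stmt5 :
    ∃ C₁ : ℝ, 0 < C₁ ∧
      ∀ p : ℝ, 1 < p →
        ∀ (n : ℕ) (f : (Fin n → Bool) → ℝ) (t : ℝ), 0 < t →
          pNorm p (heat1 t fun x => f x - cubeE f) ≤
            Real.exp (-(C₁ * (2 * min (1 / p) (1 / (p / (p - 1))))) * t) *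
              pNorm p (fun x => f x - cubeE f) := by
  refine ⟨1 / 4, by norm_num, fun p hp n f t ht => ?_⟩
  have hmean : 𝔼 x, (f x - cubeE f) = 0 := by
    rw [expect_sub_distrib, Fintype.expect_const, cubeE_eq_expect, sub_self]
  have hrate : 1 / 4 * (2 * min (1 / p) (1 / (p / (p - 1)))) = min (2 / p) (2 - 2 / p) / 4 := by
    have hp₀ : p ≠ 0 := by linarith
    have hconj : 2 * (1 / (p / (p - 1))) = 2 - 2 / p := by
      rw [one_div_div]
      field_simp
    rw [mul_min_of_nonneg _ _ zero_le_two, mul_one_div, hconj]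
    ring
  rw [hrate]
  exact pNorm_heat1_le hp ht.le hmean
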